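/- Let θ > 1. There exists a constant C, depending only on θ, such that for every Schwartz vector field v = (v¹, v²) : ℝ² → ℝ² with div v = 0 and vorticity ω = ∂₁v² − ∂₂v¹, one has ‖∇v‖_{L^∞} ≤ C · ‖v‖_{L²}^{(θ−1)/(θ+1)} · [ω]_θ^{2/(θ+1)}, where ‖∇v‖_{L^∞} is the supremum over x of the norm of the Jacobian matrix of v. -/

import Mathlib

open MeasureTheory ENNReal
open scoped RealInnerProductSpace

noncomputable section

/-- Shorthand for Euclidean space `ℝ^d`. -/
abbrev Ed (d : ℕ) := EuclideanSpace ℝ (Fin d)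

/-- The homogeneous Besov (Gagliardo) seminorm `[f]_{r,p}`. -/
def gagliardo (d : ℕ) (r p : ℝ) {F : Type*} [NormedAddCommGroup F] (f : Ed d → F) : ℝ≥0∞ :=
  (∫⁻ x, ∫⁻ y, (‖f x - f y‖₊ : ℝ≥0∞) ^ p / (‖x - y‖₊ : ℝ≥0∞) ^ (r * p + d)) ^ (1 / p)

/-- The homogeneous Hölder seminorm `{f}_r`. -/
def holderSemi (d : ℕ) (r : ℝ) {F : Type*} [NormedAddCommGroup F] (f : Ed d → F) : ℝ≥0∞ :=
  ⨆ x, ⨆ y, (‖f x - f y‖₊ : ℝ≥0∞) / (‖x - y‖₊ : ℝ≥0∞) ^ r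

/-- The Fourier transform `f̂(κ) = ∫ e^{-i x·κ} f(x) dx`. -/
def ftransform (d : ℕ) (f : Ed d → ℂ) (κ : Ed d) : ℂ :=
  ∫ x, Complex.exp (-(Complex.I * (⟪x, κ⟫ : ℂ))) * f x

/-- The homogeneous Sobolev seminorm `[f]_θ = ((2π)^{-d} ∫ |κ|^{2θ} |f̂(κ)|² dκ)^{1/2}`. -/
def sobolevSemi (d : ℕ) (θ : ℝ) (f : Ed d → ℂ) : ℝ≥0∞ :=
  (ENNReal.ofReal ((2 * Real.pi) ^ (-(d : ℝ))) *
    ∫⁻ κ, (‖κ‖₊ : ℝ≥0∞) ^ (2 * θ) * (‖ftransform d f κ‖₊ : ℝ≥0∞) ^ (2 : ℕ)) ^ ((1 : ℝ) / 2)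

/-- A symbol of class `S⁰_{ph}`: smooth away from the origin and positively
homogeneous of degree `0`. -/
def IsSymbol0 (d : ℕ) (a : Ed d → ℂ) : Prop :=
  ContDiffOn ℝ (⊤ : ℕ∞) a {0}ᶜ ∧ ∀ (c : ℝ) (κ : Ed d), 0 < c → κ ≠ 0 → a (c • κ) = a κ

/-- The operator `𝔞[f](x) = (2π)^{-d} ∫ e^{i x·κ} a(κ) f̂(κ) dκ` associated with a symbol. -/
def symbOp (d : ℕ) (a : Ed d → ℂ) (f : Ed d → ℂ) (x : Ed d) : ℂ :=
  (((2 * Real.pi) ^ (-(d : ℝ)) : ℝ) : ℂ) *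
    ∫ κ, Complex.exp (Complex.I * (⟪x, κ⟫ : ℂ)) * a κ * ftransform d f κ

/-- The partial derivative `∂_i f(x)`. -/
def pd (d : ℕ) (i : Fin d) (f : Ed d → ℝ) (x : Ed d) : ℝ :=
  fderiv ℝ f x (EuclideanSpace.single i 1)

/-- The half-wave propagator `(e^{itD} g)(x) = (2π)^{-d} ∫ e^{i x·κ} e^{i t|κ|} ĝ(κ) dκ`. -/
def halfWave (d : ℕ) (t : ℝ) (g : Ed d → ℂ) (x : Ed d) : ℂ :=
  (((2 * Real.pi) ^ (-(d : ℝ)) : ℝ) : ℂ) *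
    ∫ κ, Complex.exp (Complex.I * ((⟪x, κ⟫ : ℂ) + (t : ℂ) * ((‖κ‖ : ℝ) : ℂ))) *
      ftransform d g κ

end


open FourierTransform LineDeriv SchwartzMap

lemma aux_lint_smul (c : ℝ) (hc : 0 < c) (f : Ed 2 → ℝ≥0∞) (hf : Measurable f) :
    ∫⁻ x, f (c • x) = ENNReal.ofReal ((c ^ 2)⁻¹) * ∫⁻ x, f x := by
  have h := Measure.map_addHaar_smul (volume : Measure (Ed 2)) hc.ne'
  have h2 : ∫⁻ x, f x ∂(Measure.map (fun x : Ed 2 => c • x) volume) = ∫⁻ x, f (c • x) :=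
    lintegral_map hf (measurable_const_smul c)
  rw [← h2, h, lintegral_smul_measure]
  simp [abs_of_pos hc]

lemma aux_one_add (p t : ℝ) (hp : 0 ≤ p) (ht : 0 ≤ t) :
    (1 + t) ^ p ≤ 2 ^ p * (1 + t ^ p) := by
  rcases le_total t 1 with h | h
  · calc (1 + t) ^ p ≤ 2 ^ p := Real.rpow_le_rpow (by linarith) (by linarith) hp
      _ ≤ _ := by
        have := Real.rpow_nonneg ht p
        have h2 : (0 : ℝ) ≤ 2 ^ p := by positivity
        nlinarith
  · calc (1 + t) ^ p ≤ (2 * t) ^ p := Real.rpow_le_rpow (by linarith) (by linarith) hp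
      _ = 2 ^ p * t ^ p := Real.mul_rpow (by norm_num) ht
      _ ≤ _ := by
        have h2 : (0 : ℝ) ≤ 2 ^ p := by positivity
        nlinarith

lemma aux_interp_pos (θ : ℝ) (hθ : 1 < θ) (I : ℝ) (hI : 0 ≤ I)
    (hII : ∫⁻ x : Ed 2, ENNReal.ofReal ((1 + ‖x‖) ^ (-(2 * θ))) ≤ ENNReal.ofReal I)
    (g : Ed 2 → ℝ≥0∞) (hg : Measurable g) (a b : ℝ) (ha : 0 < a) (hb : 0 < b)
    (h1 : ∫⁻ x, g x ^ 2 ≤ ENNReal.ofReal (a ^ 2))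
    (h2 : ∫⁻ x, (‖x‖₊ : ℝ≥0∞) ^ (2 * θ + 2) * g x ^ 2 ≤ ENNReal.ofReal (b ^ 2)) :
    ∫⁻ x, (‖x‖₊ : ℝ≥0∞) * g x ≤
      ENNReal.ofReal (√(I * (2 ^ (2 * θ + 2) * 2)) *
        (a ^ ((θ - 1) / (θ + 1)) * b ^ (2 / (θ + 1)))) := by
  obtain ⟨R, hR0, hRe⟩ : ∃ R : ℝ, 0 < R ∧ R = (b / a) ^ (1 / (θ + 1)) :=
    ⟨_, by positivity, rfl⟩
  have hθ1 : θ + 1 ≠ 0 := by linarith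
  have hR1 : R ^ (-(2 * θ + 2)) * b ^ 2 = a ^ 2 := by
    rw [hRe, ← Real.rpow_mul (by positivity),
      show 1 / (θ + 1) * -(2 * θ + 2) = ((-2 : ℤ) : ℝ) by push_cast; field_simp,
      Real.rpow_intCast]
    rw [zpow_neg]
    norm_cast
    field_simp
  have hR2 : R ^ 2 * a = a ^ ((θ - 1) / (θ + 1)) * b ^ (2 / (θ + 1)) := by
    rw [hRe, ← Real.rpow_natCast, ← Real.rpow_mul (by positivity),
      show 1 / (θ + 1) * ((2 : ℕ) : ℝ) = 2 / (θ + 1) by push_cast; ring,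
      Real.div_rpow hb.le ha.le,
      show (θ - 1) / (θ + 1) = 1 - 2 / (θ + 1) by field_simp; ring,
      Real.rpow_sub ha, Real.rpow_one]
    ring
  set w : Ed 2 → ℝ := fun x => 1 + ‖R⁻¹ • x‖ with hw
  have hwn : ∀ x, w x = 1 + ‖x‖ / R := fun x => by
    simp [hw, norm_smul, abs_of_pos hR0, div_eq_inv_mul]
  have hw1 : ∀ x, 1 ≤ w x := fun x => by simp [hw]
  have hwpos : ∀ x, 0 < w x := fun x => by linarith [hw1 x]
  have hwm : Measurable w := by fun_prop
  set f1 : Ed 2 → ℝ≥0∞ := fun x => ENNReal.ofReal (‖x‖ * w x ^ (-(θ + 1))) with hf1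
  set f2 : Ed 2 → ℝ≥0∞ := fun x => ENNReal.ofReal (w x ^ (θ + 1)) * g x with hf2
  have e0 : ∀ x, (‖x‖₊ : ℝ≥0∞) * g x = (f1 * f2) x := fun x => by
    simp only [Pi.mul_apply, hf1, hf2]
    rw [← mul_assoc, ← ENNReal.ofReal_mul (by have := hwpos x; positivity), mul_assoc,
      ← Real.rpow_add (hwpos x)]
    simp [enorm_eq_nnnorm]
  have hm1 : Measurable f1 := by fun_prop
  have hm2 : Measurable f2 := by fun_prop
  have CS := ENNReal.lintegral_mul_le_Lp_mul_Lq (volume : Measure (Ed 2))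
    Real.HolderConjugate.two_two hm1.aemeasurable hm2.aemeasurable
  have b1 : ∫⁻ x, f1 x ^ (2 : ℝ) ≤ ENNReal.ofReal (R ^ 4 * I) := by
    have : ∀ x, f1 x ^ (2 : ℝ) ≤
        ENNReal.ofReal (R ^ 2) * (fun y : Ed 2 => ENNReal.ofReal ((1 + ‖y‖) ^ (-(2 * θ)))) (R⁻¹ • x) := by
      intro x
      have hp := hwpos x
      simp only [hf1]
      rw [ENNReal.ofReal_rpow_of_nonneg (by positivity) (by norm_num),
        ← ENNReal.ofReal_mul (by positivity)]
      apply ENNReal.ofReal_le_ofReal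
      change _ ≤ R ^ 2 * w x ^ (-(2 * θ))
      have e : ‖x‖ ≤ R * w x := by
        rw [hwn]; field_simp; linarith
      rw [Real.rpow_two, mul_pow, ← Real.rpow_natCast (w x ^ (-(θ + 1))), ← Real.rpow_mul hp.le]
      calc ‖x‖ ^ 2 * w x ^ (-(θ + 1) * ((2 : ℕ) : ℝ)) ≤
          (R * w x) ^ 2 * w x ^ (-(θ + 1) * ((2 : ℕ) : ℝ)) := by gcongr
        _ = R ^ 2 * (w x ^ ((2 : ℕ) : ℝ) * w x ^ (-(θ + 1) * ((2 : ℕ) : ℝ))) := by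
          rw [Real.rpow_natCast]; ring
        _ = _ := by
          rw [← Real.rpow_add hp]
          congr 2
          push_cast; ring
    calc _ ≤ _ := lintegral_mono this
      _ = ENNReal.ofReal (R ^ 2) * (ENNReal.ofReal (R ^ 2) *
          ∫⁻ x : Ed 2, ENNReal.ofReal ((1 + ‖x‖) ^ (-(2 * θ)))) := by
        rw [lintegral_const_mul _ (by fun_prop),
          aux_lint_smul R⁻¹ (by positivity)
            (fun y : Ed 2 => ENNReal.ofReal ((1 + ‖y‖) ^ (-(2 * θ)))) (by fun_prop)]
        simp
      _ ≤ ENNReal.ofReal (R ^ 2) * (ENNReal.ofReal (R ^ 2) * ENNReal.ofReal I) := by gcongr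
      _ = _ := by
        rw [← ENNReal.ofReal_mul (by positivity), ← ENNReal.ofReal_mul (by positivity)]
        congr 1; ring
  have b2 : ∫⁻ x, f2 x ^ (2 : ℝ) ≤ ENNReal.ofReal (2 ^ (2 * θ + 2) * 2 * a ^ 2) := by
    have : ∀ x, f2 x ^ (2 : ℝ) ≤ ENNReal.ofReal (2 ^ (2 * θ + 2)) *
        (g x ^ 2 + ENNReal.ofReal (R ^ (-(2 * θ + 2))) *
          ((‖x‖₊ : ℝ≥0∞) ^ (2 * θ + 2) * g x ^ 2)) := by
      intro x
      have hp := hwpos x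
      simp only [hf2]
      rw [ENNReal.mul_rpow_of_nonneg _ _ (by norm_num),
        ENNReal.ofReal_rpow_of_nonneg (by positivity) (by norm_num), ← Real.rpow_mul hp.le,
        ENNReal.rpow_two]
      have e : w x ^ ((θ + 1) * 2) ≤
          2 ^ (2 * θ + 2) * (1 + R ^ (-(2 * θ + 2)) * ‖x‖ ^ (2 * θ + 2)) := by
        rw [hwn, show (θ + 1) * 2 = 2 * θ + 2 by ring]
        refine (aux_one_add _ _ (by linarith) (by positivity)).trans_eq ?_
        rw [Real.div_rpow (by positivity) hR0.le, Real.rpow_neg hR0.le]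
        ring
      have e3 : (‖x‖₊ : ℝ≥0∞) ^ (2 * θ + 2) = ENNReal.ofReal (‖x‖ ^ (2 * θ + 2)) := by
        rw [← ENNReal.ofReal_rpow_of_nonneg (by positivity) (by linarith)]
        simp [enorm_eq_nnnorm]
      calc _ ≤ ENNReal.ofReal (2 ^ (2 * θ + 2) *
            (1 + R ^ (-(2 * θ + 2)) * ‖x‖ ^ (2 * θ + 2))) * g x ^ 2 := by gcongr
        _ = _ := by
          rw [e3, ENNReal.ofReal_mul (by positivity), ENNReal.ofReal_add (by positivity)
            (by positivity), ENNReal.ofReal_mul (by positivity)]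
          simp
          ring
    calc _ ≤ _ := lintegral_mono this
      _ = ENNReal.ofReal (2 ^ (2 * θ + 2)) * ((∫⁻ x, g x ^ 2) +
          ENNReal.ofReal (R ^ (-(2 * θ + 2))) *
            ∫⁻ x, (‖x‖₊ : ℝ≥0∞) ^ (2 * θ + 2) * g x ^ 2) := by
        rw [lintegral_const_mul _ (by fun_prop), lintegral_add_left (by fun_prop),
          lintegral_const_mul _ (by fun_prop)]
      _ ≤ ENNReal.ofReal (2 ^ (2 * θ + 2)) * (ENNReal.ofReal (a ^ 2) +
          ENNReal.ofReal (R ^ (-(2 * θ + 2))) * ENNReal.ofReal (b ^ 2)) := by gcongr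
      _ = _ := by
        rw [← ENNReal.ofReal_mul (by positivity), hR1,
          ← ENNReal.ofReal_add (by positivity) (by positivity),
          ← ENNReal.ofReal_mul (by positivity)]
        congr 1; ring
  calc ∫⁻ x, (‖x‖₊ : ℝ≥0∞) * g x = ∫⁻ x, (f1 * f2) x := lintegral_congr e0
    _ ≤ _ := CS
    _ ≤ ENNReal.ofReal (R ^ 4 * I) ^ (1 / 2 : ℝ) *
        ENNReal.ofReal (2 ^ (2 * θ + 2) * 2 * a ^ 2) ^ (1 / 2 : ℝ) := by gcongr
    _ = _ := by
      rw [ENNReal.ofReal_rpow_of_nonneg (by positivity) (by norm_num),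
        ENNReal.ofReal_rpow_of_nonneg (by positivity) (by norm_num),
        ← ENNReal.ofReal_mul (by positivity), ← Real.sqrt_eq_rpow, ← Real.sqrt_eq_rpow,
        ← Real.sqrt_mul (by positivity), ← hR2]
      congr 1
      rw [show R ^ 4 * I * (2 ^ (2 * θ + 2) * 2 * a ^ 2) =
        (I * (2 ^ (2 * θ + 2) * 2)) * (R ^ 2 * a) ^ 2 by ring,
        Real.sqrt_mul (by positivity), Real.sqrt_sq (by positivity)]

lemma aux_interp (θ : ℝ) (hθ : 1 < θ) :
    ∃ K : ℝ, 0 < K ∧ ∀ (g : Ed 2 → ℝ≥0∞) (_ : Measurable g) (A B : ℝ≥0∞),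
      ∫⁻ x, g x ^ 2 ≤ A ^ 2 →
      ∫⁻ x, (‖x‖₊ : ℝ≥0∞) ^ (2 * θ + 2) * g x ^ 2 ≤ B ^ 2 →
      ∫⁻ x, (‖x‖₊ : ℝ≥0∞) * g x ≤
        ENNReal.ofReal K * A ^ ((θ - 1) / (θ + 1)) * B ^ (2 / (θ + 1)) := by
  have hfin := finite_integral_one_add_norm (μ := (volume : Measure (Ed 2))) (r := 2 * θ)
    (by simp; linarith)
  set J := ∫⁻ x : Ed 2, ENNReal.ofReal ((1 + ‖x‖) ^ (-(2 * θ))) with hJ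
  have hJle : J ≤ ENNReal.ofReal (J.toReal + 1) := by
    rw [← ENNReal.ofReal_toReal hfin.ne]
    apply ENNReal.ofReal_le_ofReal
    rw [ENNReal.toReal_ofReal (by positivity)]; linarith
  have hI0 : 0 < J.toReal + 1 := by positivity
  have hp1 : 0 < (θ - 1) / (θ + 1) := div_pos (by linarith) (by linarith)
  have hp2 : 0 < 2 / (θ + 1) := div_pos (by linarith) (by linarith)
  refine ⟨√((J.toReal + 1) * (2 ^ (2 * θ + 2) * 2)), by positivity, ?_⟩
  intro g hg A B h1 h2
  have key0 : (∀ᵐ x : Ed 2, g x = 0) → ∫⁻ x, (‖x‖₊ : ℝ≥0∞) * g x = 0 := by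
    intro h
    rw [lintegral_eq_zero_iff (by fun_prop)]
    filter_upwards [h] with x hx
    simp [hx]
  rcases eq_or_ne A 0 with rfl | hA
  · rw [key0]
    · exact zero_le
    · have : ∫⁻ x, g x ^ 2 = 0 := by simpa using h1
      rw [lintegral_eq_zero_iff (by fun_prop)] at this
      filter_upwards [this] with x hx
      simpa using hx
  rcases eq_or_ne B 0 with rfl | hB
  · rw [key0]
    · exact zero_le
    · have : ∫⁻ x, (‖x‖₊ : ℝ≥0∞) ^ (2 * θ + 2) * g x ^ 2 = 0 := by simpa using h2
      rw [lintegral_eq_zero_iff (by fun_prop)] at this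
      have hne : ∀ᵐ x : Ed 2, x ≠ 0 := by
        simp [ae_iff]
      filter_upwards [this, hne] with x hx hx0
      have : (‖x‖₊ : ℝ≥0∞) ^ (2 * θ + 2) ≠ 0 := by
        simp [ENNReal.rpow_eq_zero_iff, hx0]
      simp only [Pi.zero_apply, mul_eq_zero, this, false_or] at hx
      simpa using hx
  have hK : ENNReal.ofReal √((J.toReal + 1) * (2 ^ (2 * θ + 2) * 2)) ≠ 0 := by
    simp only [ne_eq, ENNReal.ofReal_eq_zero, not_le]; positivity
  rcases eq_or_ne A ⊤ with rfl | hA'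
  · rw [ENNReal.top_rpow_of_pos hp1, ENNReal.mul_top hK, ENNReal.top_mul]
    · exact le_top
    · simp [ENNReal.rpow_eq_zero_iff, hB, hp2.le]
  rcases eq_or_ne B ⊤ with rfl | hB'
  · rw [ENNReal.top_rpow_of_pos hp2, ENNReal.mul_top]
    · exact le_top
    · refine mul_ne_zero hK ?_
      simp [ENNReal.rpow_eq_zero_iff, hA, hp1.le]
  have ha := ENNReal.toReal_pos hA hA'
  have hb := ENNReal.toReal_pos hB hB'
  have := aux_interp_pos θ hθ (J.toReal + 1) hI0.le hJle g hg A.toReal B.toReal ha hb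
    (by rwa [ENNReal.ofReal_pow ha.le, ENNReal.ofReal_toReal hA'])
    (by rwa [ENNReal.ofReal_pow hb.le, ENNReal.ofReal_toReal hB'])
  refine this.trans_eq ?_
  rw [ENNReal.ofReal_mul (by positivity), ENNReal.ofReal_mul (by positivity),
    ← ENNReal.ofReal_rpow_of_nonneg ha.le hp1.le, ← ENNReal.ofReal_rpow_of_nonneg hb.le hp2.le,
    ENNReal.ofReal_toReal hA', ENNReal.ofReal_toReal hB', mul_assoc]


/-- complexified component -/
noncomputable def auxL (j : Fin 2) : Ed 2 →L[ℝ] ℂ :=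
  Complex.ofRealCLM ∘L (EuclideanSpace.proj j : Ed 2 →L[ℝ] ℝ)

noncomputable def auxU (v : SchwartzMap (Ed 2) (Ed 2)) (j : Fin 2) : SchwartzMap (Ed 2) ℂ :=
  SchwartzMap.postcompCLM (auxL j) v

lemma auxU_apply (v : SchwartzMap (Ed 2) (Ed 2)) (j : Fin 2) (x : Ed 2) :
    auxU v j x = ((v x j : ℝ) : ℂ) := rfl

lemma auxU_deriv (v : SchwartzMap (Ed 2) (Ed 2)) (j : Fin 2) (m x : Ed 2) :
    (∂_{m} (auxU v j)) x = ((fderiv ℝ v x m j : ℝ) : ℂ) := by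
  rw [SchwartzMap.lineDerivOp_apply_eq_fderiv]
  have : HasFDerivAt (auxU v j) ((auxL j) ∘L fderiv ℝ v x) x :=
    (auxL j).hasFDerivAt.comp x v.differentiableAt.hasFDerivAt
  rw [this.fderiv]; rfl

lemma aux_pd (v : SchwartzMap (Ed 2) (Ed 2)) (i j : Fin 2) (x : Ed 2) :
    pd 2 i (fun y => v y j) x = fderiv ℝ v x (EuclideanSpace.single i 1) j := by
  have : HasFDerivAt (fun y => v y j)
      ((EuclideanSpace.proj j : Ed 2 →L[ℝ] ℝ) ∘L fderiv ℝ v x) x :=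
    (EuclideanSpace.proj j : Ed 2 →L[ℝ] ℝ).hasFDerivAt.comp x v.differentiableAt.hasFDerivAt
  rw [pd, this.fderiv]; rfl

lemma aux_fourier_deriv (u : SchwartzMap (Ed 2) ℂ) (i : Fin 2) (ξ : Ed 2) :
    (𝓕 (∂_{(EuclideanSpace.single i 1 : Ed 2)} u)) ξ = 2 * Real.pi * Complex.I * (ξ i * (𝓕 u) ξ) := by
  rw [SchwartzMap.fourier_lineDerivOp_eq]
  have : (inner ℝ · (EuclideanSpace.single i 1 : Ed 2)).HasTemperateGrowth := by fun_prop
  have h2 : inner ℝ ξ (EuclideanSpace.single i 1 : Ed 2) = ξ i := by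
    simp [EuclideanSpace.inner_single_right]
  rw [smul_apply, SchwartzMap.smulLeftCLM_apply_apply this, h2]
  simp

/-- pointwise bound by the L1 norm of the Fourier transform -/
lemma aux_sup (u : SchwartzMap (Ed 2) ℂ) (x : Ed 2) :
    ‖u x‖ₑ ≤ ∫⁻ ξ, ‖(𝓕 u) ξ‖ₑ := by
  have h : u x = (𝓕⁻ (𝓕 u)) x := by rw [FourierTransform.fourierInv_fourier_eq]
  rw [h, SchwartzMap.fourierInv_coe, Real.fourierInv_eq]
  refine (enorm_integral_le_lintegral_enorm _).trans_eq ?_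
  refine lintegral_congr fun ξ => ?_
  rw [← ofReal_norm, ← ofReal_norm, Circle.norm_smul]

lemma aux_planch (v : SchwartzMap (Ed 2) (Ed 2)) (j : Fin 2) :
    ∫⁻ ξ, ‖(𝓕 (auxU v j)) ξ‖ₑ ^ 2 ≤ (eLpNorm v 2 volume) ^ 2 := by
  have conv : ∀ {F : Type} [NormedAddCommGroup F] (f : Ed 2 → F),
      ∫⁻ ξ, ‖f ξ‖ₑ ^ 2 = (eLpNorm f 2 volume) ^ 2 := by
    intro F _ f
    rw [eLpNorm_eq_lintegral_rpow_enorm_toReal (by norm_num) (by norm_num)]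
    rw [← ENNReal.rpow_natCast, ← ENNReal.rpow_mul]
    simp
  have e1 := SchwartzMap.norm_fourier_toL2_eq (auxU v j)
  rw [SchwartzMap.norm_toLp, SchwartzMap.norm_toLp] at e1
  have e2 : eLpNorm (⇑(𝓕 (auxU v j) : SchwartzMap (Ed 2) ℂ)) 2 volume = eLpNorm (auxU v j) 2 volume :=
    (ENNReal.toReal_eq_toReal_iff' ((𝓕 (auxU v j) : SchwartzMap (Ed 2) ℂ).memLp 2 volume).2.ne
      ((auxU v j).memLp 2 volume).2.ne).1 e1
  rw [conv, e2]
  gcongr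
  apply eLpNorm_mono
  intro x
  rw [auxU_apply, Complex.norm_real]
  exact PiLp.norm_apply_le (v x) j

lemma aux_ftransform (f : Ed 2 → ℂ) (κ : Ed 2) :
    ftransform 2 f κ = 𝓕 f ((2 * Real.pi)⁻¹ • κ) := by
  rw [Real.fourier_eq', ftransform]
  congr 1; ext x
  rw [smul_eq_mul]
  congr 2
  rw [inner_smul_right]
  push_cast
  field_simp

lemma aux_lagrange (a b : ℂ) (s t : ℝ) (h : s * a + t * b = 0) :
    ‖(s * b - t * a : ℂ)‖ ^ 2 = (s ^ 2 + t ^ 2) * (‖a‖ ^ 2 + ‖b‖ ^ 2) := by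
  have h1 := congrArg Complex.re h
  have h2 := congrArg Complex.im h
  simp at h1 h2
  simp only [Complex.sq_norm, Complex.normSq_apply]
  simp
  linear_combination (-(s * a.re + t * b.re)) * h1 - (s * a.im + t * b.im) * h2

noncomputable def auxW (v : SchwartzMap (Ed 2) (Ed 2)) : SchwartzMap (Ed 2) ℂ :=
  ∂_{(EuclideanSpace.single 0 1 : Ed 2)} (auxU v 1) - ∂_{(EuclideanSpace.single 1 1 : Ed 2)} (auxU v 0)

lemma aux_vort (v : SchwartzMap (Ed 2) (Ed 2))
    (hv : ∀ x, pd 2 0 (fun y => v y 0) x + pd 2 1 (fun y => v y 1) x = 0) (j : Fin 2) (ξ : Ed 2) :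
    ‖ξ‖ * ‖(𝓕 (auxU v j)) ξ‖ ≤ ‖(𝓕 (auxW v)) ξ‖ := by
  have hd : ∂_{(EuclideanSpace.single 0 1 : Ed 2)} (auxU v 0) +
      ∂_{(EuclideanSpace.single 1 1 : Ed 2)} (auxU v 1) = 0 := by
    ext x
    have := hv x
    rw [aux_pd, aux_pd] at this
    rw [add_apply, auxU_deriv, auxU_deriv]
    rw [zero_apply]; exact_mod_cast this
  have hd2 := congrArg (fun f : SchwartzMap (Ed 2) ℂ => (𝓕 f) ξ) hd
  simp only [FourierTransform.fourier_add, add_apply, aux_fourier_deriv,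
    FourierTransform.fourier_zero, zero_apply] at hd2
  have hpi : (2 * Real.pi * Complex.I : ℂ) ≠ 0 := by simp [Real.pi_ne_zero]
  have hd3 : (ξ 0 : ℂ) * (𝓕 (auxU v 0)) ξ + ξ 1 * (𝓕 (auxU v 1)) ξ = 0 := by
    rw [← mul_add] at hd2
    exact (mul_eq_zero.1 hd2).resolve_left hpi
  have hL := aux_lagrange _ _ _ _ hd3
  have hW : (𝓕 (auxW v)) ξ = 2 * Real.pi * Complex.I *
      (ξ 0 * (𝓕 (auxU v 1)) ξ - ξ 1 * (𝓕 (auxU v 0)) ξ) := by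
    rw [auxW, sub_eq_add_neg, FourierTransform.fourier_add, FourierTransform.fourier_neg]
    simp only [add_apply, neg_apply, aux_fourier_deriv]
    ring
  have hn : ‖ξ‖ ^ 2 = ξ 0 ^ 2 + ξ 1 ^ 2 := by
    simp [EuclideanSpace.norm_sq_eq]
  rw [← hn] at hL
  have hW2 : ‖(ξ 0 * (𝓕 (auxU v 1)) ξ - ξ 1 * (𝓕 (auxU v 0)) ξ : ℂ)‖ ≤ ‖(𝓕 (auxW v)) ξ‖ := by
    rw [hW, norm_mul]
    refine le_mul_of_one_le_left (norm_nonneg _) ?_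
    simp [abs_of_pos Real.pi_pos]
    linarith [Real.pi_gt_three]
  refine le_trans ?_ hW2
  refine abs_le_of_sq_le_sq' ?_ (norm_nonneg _) |>.2
  rw [hL, mul_pow]
  gcongr
  fin_cases j <;> simp

lemma aux_sob (θ : ℝ) (hθ : 1 < θ) (v : SchwartzMap (Ed 2) (Ed 2))
    (hv : ∀ x, pd 2 0 (fun y => v y 0) x + pd 2 1 (fun y => v y 1) x = 0) (j : Fin 2) :
    ∫⁻ ξ, (‖ξ‖₊ : ℝ≥0∞) ^ (2 * θ + 2) * ‖(𝓕 (auxU v j)) ξ‖ₑ ^ 2 ≤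
    (sobolevSemi 2 θ
      (fun x => ((pd 2 0 (fun y => v y 1) x - pd 2 1 (fun y => v y 0) x : ℝ) : ℂ))) ^ 2 := by
  have e : (fun x => ((pd 2 0 (fun y => v y 1) x - pd 2 1 (fun y => v y 0) x : ℝ) : ℂ)) =
      ⇑(auxW v) := by
    ext x
    rw [auxW, sub_apply, auxU_deriv, auxU_deriv, aux_pd, aux_pd]
    push_cast; rfl
  rw [e, sobolevSemi, ← ENNReal.rpow_natCast _ 2, ← ENNReal.rpow_mul]
  have hpi : (0 : ℝ) < (2 * Real.pi) := by positivity
  have hscale := aux_lint_smul (2 * Real.pi)⁻¹ (by positivity)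
    (fun ξ : Ed 2 => ENNReal.ofReal ((2 * Real.pi) ^ (2 * θ)) *
      ((‖ξ‖₊ : ℝ≥0∞) ^ (2 * θ) * ‖(𝓕 (auxW v)) ξ‖ₑ ^ 2)) (by
        have := (𝓕 (auxW v)).continuous.measurable
        fun_prop)
  have h2 : ∫⁻ κ, (‖κ‖₊ : ℝ≥0∞) ^ (2 * θ) * (‖ftransform 2 (auxW v) κ‖₊ : ℝ≥0∞) ^ (2 : ℕ) =
      ∫⁻ κ : Ed 2, (fun ξ : Ed 2 => ENNReal.ofReal ((2 * Real.pi) ^ (2 * θ)) *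
      ((‖ξ‖₊ : ℝ≥0∞) ^ (2 * θ) * ‖(𝓕 (auxW v)) ξ‖ₑ ^ 2)) ((2 * Real.pi)⁻¹ • κ) := by
    refine lintegral_congr fun κ => ?_
    simp only
    rw [aux_ftransform, ← SchwartzMap.fourier_coe, ← mul_assoc, enorm_eq_nnnorm]
    congr 1
    rw [← ENNReal.ofReal_rpow_of_nonneg hpi.le (by linarith),
      ← ENNReal.mul_rpow_of_nonneg _ _ (by linarith)]
    congr 1
    rw [← enorm_eq_nnnorm, ← enorm_eq_nnnorm, ← ofReal_norm, ← ofReal_norm, norm_smul,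
      ← ENNReal.ofReal_mul hpi.le]
    congr 1
    rw [Real.norm_of_nonneg (by positivity)]
    field_simp
  rw [h2, hscale]
  have hc : ENNReal.ofReal ((2 * Real.pi) ^ (-((2 : ℕ) : ℝ))) *
      ENNReal.ofReal ((((2 * Real.pi)⁻¹) ^ 2)⁻¹) = 1 := by
    rw [← ENNReal.ofReal_mul (by positivity), Real.rpow_neg hpi.le, Real.rpow_natCast]
    simp
    field_simp
  rw [← mul_assoc, hc, one_mul, show (1 : ℝ) / 2 * ((2 : ℕ) : ℝ) = 1 by norm_num, ENNReal.rpow_one]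
  refine lintegral_mono fun ξ => ?_
  have hone : 1 ≤ ENNReal.ofReal ((2 * Real.pi) ^ (2 * θ)) := by
    rw [← ENNReal.ofReal_one]
    apply ENNReal.ofReal_le_ofReal
    exact Real.one_le_rpow (by linarith [Real.pi_gt_three]) (by linarith)
  refine le_trans ?_ (le_mul_of_one_le_left zero_le hone)
  rw [ENNReal.rpow_add_of_nonneg _ _ (by linarith) (by norm_num), mul_assoc, ENNReal.rpow_two,
    ← mul_pow]
  gcongr
  have := ENNReal.ofReal_le_ofReal (aux_vort v hv j ξ)
  rw [ENNReal.ofReal_mul (norm_nonneg _)] at this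
  simpa only [ofReal_norm, enorm_eq_nnnorm] using this

lemma aux_opnorm (T : Ed 2 →L[ℝ] Ed 2) (M : ℝ) 
    (h : ∀ i j : Fin 2, ‖T (EuclideanSpace.single i 1) j‖ ≤ M) : ‖T‖ ≤ 4 * M := by
  have hM : 0 ≤ M := (norm_nonneg _).trans (h 0 0)
  have hcol : ∀ i, ‖T (EuclideanSpace.single i 1)‖ ≤ 2 * M := by
    intro i
    rw [EuclideanSpace.norm_eq]
    refine Real.sqrt_le_iff.2 ⟨by positivity, ?_⟩
    rw [Fin.sum_univ_two]
    have h0 := pow_le_pow_left₀ (norm_nonneg _) (h i 0) 2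
    have h1 := pow_le_pow_left₀ (norm_nonneg _) (h i 1) 2
    nlinarith
  refine T.opNorm_le_bound (by positivity) fun x => ?_
  have hx : x = x 0 • EuclideanSpace.single 0 (1 : ℝ) + x 1 • EuclideanSpace.single 1 (1 : ℝ) := by
    ext i; fin_cases i <;> simp
  have e : T x = x 0 • T (EuclideanSpace.single 0 (1 : ℝ)) +
      x 1 • T (EuclideanSpace.single 1 (1 : ℝ)) := by
    conv_lhs => rw [hx]
    simp only [map_add, map_smul]
  rw [e]
  calc _ ≤ ‖x 0‖ * ‖T (EuclideanSpace.single 0 (1 : ℝ))‖ +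
        ‖x 1‖ * ‖T (EuclideanSpace.single 1 (1 : ℝ))‖ := by
        refine (norm_add_le _ _).trans_eq ?_
        rw [norm_smul, norm_smul]
    _ ≤ ‖x‖ * (2 * M) + ‖x‖ * (2 * M) := by
        gcongr
        · exact PiLp.norm_apply_le x 0
        · exact hcol 0
        · exact PiLp.norm_apply_le x 1
        · exact hcol 1
    _ = _ := by ring

theorem stmt11 (θ : ℝ) (hθ : 1 < θ) :
    ∃ C : ℝ, 0 < C ∧ ∀ v : SchwartzMap (Ed 2) (Ed 2),
      (∀ x, pd 2 0 (fun y => v y 0) x + pd 2 1 (fun y => v y 1) x = 0) →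
      (⨆ x, (‖fderiv ℝ (⇑v) x‖₊ : ℝ≥0∞))
        ≤ ENNReal.ofReal C * eLpNorm (⇑v) 2 volume ^ ((θ - 1) / (θ + 1)) *
          sobolevSemi 2 θ
            (fun x => ((pd 2 0 (fun y => v y 1) x - pd 2 1 (fun y => v y 0) x : ℝ) : ℂ))
              ^ (2 / (θ + 1)) := by
  obtain ⟨K, hK, H⟩ := aux_interp θ hθ
  refine ⟨4 * (2 * Real.pi * K), by positivity, fun v hv => ?_⟩
  refine iSup_le fun x => ?_
  set A := eLpNorm (⇑v) 2 volume
  set B := sobolevSemi 2 θ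
    (fun x => ((pd 2 0 (fun y => v y 1) x - pd 2 1 (fun y => v y 0) x : ℝ) : ℂ)) with hB
  have hcomp : ∀ i j : Fin 2, ENNReal.ofReal ‖fderiv ℝ v x (EuclideanSpace.single i 1) j‖ ≤
      ENNReal.ofReal (2 * Real.pi) *
        (ENNReal.ofReal K * A ^ ((θ - 1) / (θ + 1)) * B ^ (2 / (θ + 1))) := by
    intro i j
    have h1 := aux_sup (∂_{(EuclideanSpace.single i 1 : Ed 2)} (auxU v j)) x
    rw [auxU_deriv, ← ofReal_norm, Complex.norm_real] at h1
    have hm : Measurable (fun ξ => ‖(𝓕 (auxU v j)) ξ‖ₑ) :=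
      (𝓕 (auxU v j)).continuous.measurable.enorm
    refine h1.trans (le_trans ?_ (mul_le_mul_right (H (fun ξ => ‖(𝓕 (auxU v j)) ξ‖ₑ) hm A B (aux_planch v j) (aux_sob θ hθ v hv j)) _))
    rw [← lintegral_const_mul _ (by fun_prop)]
    refine lintegral_mono fun ξ => ?_
    rw [aux_fourier_deriv, ← enorm_eq_nnnorm, ← ofReal_norm, ← ofReal_norm,
      ← ofReal_norm, ← ENNReal.ofReal_mul (by positivity),
      ← ENNReal.ofReal_mul (by positivity)]
    apply ENNReal.ofReal_le_ofReal
    rw [norm_mul, norm_mul (ξ i : ℂ), Complex.norm_real]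
    have : ‖(2 * Real.pi * Complex.I : ℂ)‖ = 2 * Real.pi := by simp [abs_of_pos Real.pi_pos]
    rw [this]
    gcongr
    exact PiLp.norm_apply_le ξ i
  set M := A ^ ((θ - 1) / (θ + 1)) * B ^ (2 / (θ + 1)) with hM
  have goal_eq : ENNReal.ofReal (4 * (2 * Real.pi * K)) * A ^ ((θ - 1) / (θ + 1)) *
      B ^ (2 / (θ + 1)) = ENNReal.ofReal 4 * (ENNReal.ofReal (2 * Real.pi) *
        (ENNReal.ofReal K * A ^ ((θ - 1) / (θ + 1)) * B ^ (2 / (θ + 1)))) := by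
    rw [ENNReal.ofReal_mul (by positivity), ENNReal.ofReal_mul (by positivity)]
    ring
  rw [goal_eq]
  set Q := ENNReal.ofReal (2 * Real.pi) *
        (ENNReal.ofReal K * A ^ ((θ - 1) / (θ + 1)) * B ^ (2 / (θ + 1))) with hQ
  rcases eq_or_ne Q ⊤ with hQt | hQt
  · rw [hQt, ENNReal.mul_top (by simp)]; exact le_top
  have := aux_opnorm (fderiv ℝ v x) Q.toReal fun i j =>
    (ENNReal.ofReal_le_iff_le_toReal hQt).1 (hcomp i j)
  rw [← enorm_eq_nnnorm, ← ofReal_norm]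
  refine (ENNReal.ofReal_le_ofReal this).trans_eq ?_
  rw [ENNReal.ofReal_mul (by norm_num), ENNReal.ofReal_toReal hQt]
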